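/- Let G be a finite connected simple graph with at least three vertices, and let T be a spanning tree of G with the additional requirement that if G is isomorphic to the complete graph K₄ or to K₄ with one edge removed, then T is isomorphic to the star K_{1,3}. Then the edge set E(T), regarded as a set of vertices of the line graph L(G), is a doubly resolving set of L(G). -/

import Mathlib

open SimpleGraph

variable {V : Type*}

/-- `S` is a doubly resolving set of `G`: every pair of distinct vertices is doubly
resolved by some pair of vertices of `S`. -/
def IsDoublyResolvingSet (G : SimpleGraph V) (S : Set V) : Prop :=
  ∀ u v : V, u ≠ v → ∃ x ∈ S, ∃ y ∈ S,
    (G.dist u x : ℤ) - (G.dist u y : ℤ) ≠ (G.dist v x : ℤ) - (G.dist v y : ℤ)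

/-- `Ψ(G)`: the minimum cardinality of a doubly resolving set of `G`. -/
noncomputable def psi (G : SimpleGraph V) : ℕ :=
  sInf {n | ∃ S : Set V, IsDoublyResolvingSet G S ∧ S.ncard = n}

/-- The degree of a vertex, as the cardinality of its neighbor set. -/
noncomputable def deg (G : SimpleGraph V) (v : V) : ℕ := (G.neighborSet v).ncard

/-- The maximum degree `Δ(G)`. -/
noncomputable def maxDeg (G : SimpleGraph V) : ℕ := sSup (Set.range (deg G))
/-- The complete graph `K₄` minus one edge. -/
def K4MinusEdge : SimpleGraph (Fin 4) := (completeGraph (Fin 4)).deleteEdges {s(0, 1)}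

/-- The star `K_{1,3}`: vertex `0` is adjacent to the three other vertices. -/
def StarK13 : SimpleGraph (Fin 4) := SimpleGraph.fromRel (fun a _ => a = 0)

/-!
Suppose the edges `e ≠ f` of `G` are not doubly resolved by `E(T)`, so that `d(e, x) - d(f, x)` is
a constant `k` over `x ∈ E(T)`. If `k < 0`, every edge of `T` meeting `f` is `e` itself; as `T`
meets both endpoints of `f`, this forces `f = e`. By symmetry `k = 0`, so neither `e` nor `f` is in
`T` and an edge of `T` meets `e` exactly when it meets `f`. The symmetric difference of `e` and `f`
is then closed under adjacency in `T`, hence is everything: `e` and `f` are complementary, `T` is a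
connected subgraph of the 4-cycle between them and so misses at most one of its edges, and `G` is
`K₄` or `K₄` minus an edge. But `T`, unlike a star, has no universal vertex, since `e, f ∉ E(T)`.
-/

theorem isDoublyResolvingSet_iff_eq_of_dist_sub_eq {G : SimpleGraph V} {S : Set V} :
    IsDoublyResolvingSet G S ↔
      ∀ u v : V, ∀ k : ℤ, (∀ x ∈ S, (G.dist u x : ℤ) - G.dist v x = k) → u = v := by
  constructor
  · intro hS u v k hk
    by_contra hne
    obtain ⟨x, hx, y, hy, hxy⟩ := hS u v hne
    have := hk x hx
    have := hk y hy
    omega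
  · intro h u v hne
    by_contra! hS
    rcases S.eq_empty_or_nonempty with rfl | ⟨y, hy⟩
    · exact hne (h u v 0 (by simp))
    · refine hne (h u v (G.dist u y - G.dist v y) fun x hx ↦ ?_)
      have := hS x hx y hy
      omega

section Connectivity

variable {G : SimpleGraph V}

theorem eq_univ_of_forall_adj_mem (hG : G.Preconnected) {S : Set V} (hne : S.Nonempty)
    (hS : ∀ x ∈ S, ∀ y, G.Adj x y → y ∈ S) : S = Set.univ := by
  obtain ⟨u, hu⟩ := hne
  refine Set.eq_univ_of_forall fun v ↦ ?_
  by_contra hv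
  obtain ⟨p⟩ := hG u v
  obtain ⟨d, -, hfst, hsnd⟩ := p.exists_boundary_dart S hu hv
  exact hsnd (hS _ hfst _ d.adj)

theorem lineGraph_reachable_of_mem_of_mem {e f : G.edgeSet} {v : V} (he : v ∈ (e : Sym2 V))
    (hf : v ∈ (f : Sym2 V)) : G.lineGraph.Reachable e f := by
  by_cases hef : e = f
  · rw [hef]
  · exact (lineGraph_adj_iff_exists.2 ⟨hef, v, he, hf⟩).reachable

theorem lineGraph_preconnected (hG : G.Preconnected) : G.lineGraph.Preconnected := by
  intro e f
  let S : Set V := {v | ∀ g : G.edgeSet, v ∈ (g : Sym2 V) → G.lineGraph.Reachable e g}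
  have hne : S.Nonempty :=
    ⟨_, fun _ ↦ lineGraph_reachable_of_mem_of_mem (Sym2.out_fst_mem (e : Sym2 V))⟩
  have hS : S = Set.univ := eq_univ_of_forall_adj_mem hG hne fun x hx y hxy _ hg ↦
    (hx ⟨s(x, y), hxy⟩ (Sym2.mem_mk_left x y)).trans
      (lineGraph_reachable_of_mem_of_mem (Sym2.mem_mk_right x y) hg)
  exact Set.eq_univ_iff_forall.1 hS _ f (Sym2.out_fst_mem (f : Sym2 V))

theorem lineGraph_dist_eq_zero_iff (hG : G.Preconnected) {e f : G.edgeSet} :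
    G.lineGraph.dist e f = 0 ↔ e = f :=
  (lineGraph_preconnected hG e f).dist_eq_zero_iff

theorem lineGraph_dist_le_one_iff (hG : G.Preconnected) {e f : G.edgeSet} :
    G.lineGraph.dist e f ≤ 1 ↔ ∃ v, v ∈ (e : Sym2 V) ∧ v ∈ (f : Sym2 V) := by
  rw [Nat.le_one_iff_eq_zero_or_eq_one, lineGraph_dist_eq_zero_iff hG, dist_eq_one_iff_adj,
    lineGraph_adj_iff_exists]
  constructor
  · rintro (rfl | ⟨-, h⟩)
    · exact ⟨_, Sym2.out_fst_mem _, Sym2.out_fst_mem _⟩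
    · exact h
  · exact fun h ↦ or_iff_not_imp_left.2 fun hne ↦ ⟨hne, h⟩

end Connectivity

section SpanningSubgraph

variable {G T : SimpleGraph V} {e f : G.edgeSet} {k : ℤ}

theorem exists_edge_mem_of_preconnected [Nontrivial V] (hT : T.Preconnected) (hTG : T ≤ G)
    (v : V) : ∃ x : G.edgeSet, (x : Sym2 V) ∈ T.edgeSet ∧ v ∈ (x : Sym2 V) := by
  obtain ⟨w, hvw⟩ := hT.exists_adj_of_nontrivial v
  exact ⟨⟨s(v, w), hTG hvw⟩, hvw, Sym2.mem_mk_left v w⟩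

theorem eq_of_lineGraph_dist_sub_eq_of_neg (hT : T.Preconnected) (hTG : T ≤ G)
    (hdist : ∀ x : G.edgeSet, (x : Sym2 V) ∈ T.edgeSet →
      (G.lineGraph.dist e x : ℤ) - G.lineGraph.dist f x = k) (hk : k < 0) : e = f := by
  have hG := hT.mono hTG
  obtain ⟨f, hab⟩ := f
  induction f with | _ a b
  have hne : a ≠ b := G.ne_of_adj hab
  have : Nontrivial V := ⟨a, b, hne⟩
  have hmem : ∀ v ∈ s(a, b), v ∈ (e : Sym2 V) := by
    intro v hvf
    obtain ⟨x, hxT, hvx⟩ := exists_edge_mem_of_preconnected hT hTG v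
    have hfx : G.lineGraph.dist ⟨s(a, b), hab⟩ x ≤ 1 :=
      (lineGraph_dist_le_one_iff hG).2 ⟨v, hvf, hvx⟩
    have hex : G.lineGraph.dist e x = 0 := by have := hdist x hxT; omega
    rwa [(lineGraph_dist_eq_zero_iff hG).1 hex]
  exact Subtype.ext <| (Sym2.mem_and_mem_iff hne).1
    ⟨hmem a (Sym2.mem_mk_left a b), hmem b (Sym2.mem_mk_right a b)⟩

theorem lineGraph_dist_eq_of_dist_sub_eq (hT : T.Preconnected) (hTG : T ≤ G) (hne : e ≠ f)
    (hdist : ∀ x : G.edgeSet, (x : Sym2 V) ∈ T.edgeSet →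
      (G.lineGraph.dist e x : ℤ) - G.lineGraph.dist f x = k)
    (x : G.edgeSet) (hx : (x : Sym2 V) ∈ T.edgeSet) :
    G.lineGraph.dist e x = G.lineGraph.dist f x := by
  have hdist' : ∀ y : G.edgeSet, (y : Sym2 V) ∈ T.edgeSet →
      (G.lineGraph.dist f y : ℤ) - G.lineGraph.dist e y = -k :=
    fun y hy ↦ by rw [← hdist y hy, neg_sub]
  have hk : ¬ k < 0 := fun hk ↦ hne (eq_of_lineGraph_dist_sub_eq_of_neg hT hTG hdist hk)
  have hk' : ¬ -k < 0 := fun hk ↦ hne (eq_of_lineGraph_dist_sub_eq_of_neg hT hTG hdist' hk).symm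
  have := hdist x hx
  omega

theorem notMem_edgeSet_of_lineGraph_dist_eq (hG : G.Preconnected) (hne : e ≠ f)
    (hdist : ∀ x : G.edgeSet, (x : Sym2 V) ∈ T.edgeSet →
      G.lineGraph.dist e x = G.lineGraph.dist f x) : (e : Sym2 V) ∉ T.edgeSet := by
  intro he
  have hfe : G.lineGraph.dist f e = 0 := by rw [← hdist e he, dist_self]
  exact hne ((lineGraph_dist_eq_zero_iff hG).1 hfe).symm

theorem mem_or_mem_iff_of_lineGraph_dist_eq (hG : G.Preconnected) (hTG : T ≤ G)
    (hdist : ∀ x : G.edgeSet, (x : Sym2 V) ∈ T.edgeSet →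
      G.lineGraph.dist e x = G.lineGraph.dist f x) {x y : V} (hxy : T.Adj x y) :
    x ∈ (e : Sym2 V) ∨ y ∈ (e : Sym2 V) ↔ x ∈ (f : Sym2 V) ∨ y ∈ (f : Sym2 V) := by
  have meets_iff (g : G.edgeSet) : x ∈ (g : Sym2 V) ∨ y ∈ (g : Sym2 V) ↔
      G.lineGraph.dist g ⟨s(x, y), hTG hxy⟩ ≤ 1 := by
    simp [lineGraph_dist_le_one_iff hG, and_or_left, exists_or]
  rw [meets_iff, meets_iff, hdist ⟨s(x, y), hTG hxy⟩ hxy]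

end SpanningSubgraph

section ComplementaryPairs

variable {G T : SimpleGraph V} {e f : Sym2 V}

theorem mem_and_notMem_of_adj (he : e ∉ T.edgeSet)
    (hmeet : ∀ ⦃x y⦄, T.Adj x y → (x ∈ e ∨ y ∈ e ↔ x ∈ f ∨ y ∈ f)) {x y : V} (hxe : x ∈ e)
    (hxf : x ∉ f) (hxy : T.Adj x y) : y ∈ f ∧ y ∉ e := by
  refine ⟨((hmeet hxy).1 (.inl hxe)).resolve_left hxf, fun hye ↦ he ?_⟩
  rwa [(Sym2.mem_and_mem_iff hxy.ne).1 ⟨hxe, hye⟩]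

theorem isCompl_of_mem_or_mem_iff (hT : T.Preconnected) (hne : e ≠ f) (he : e ∉ T.edgeSet)
    (hf : f ∉ T.edgeSet)
    (hmeet : ∀ ⦃x y⦄, T.Adj x y → (x ∈ e ∨ y ∈ e ↔ x ∈ f ∨ y ∈ f)) :
    IsCompl (e : Set V) (f : Set V) := by
  refine (symmDiff_eq_top _ _).1 (eq_univ_of_forall_adj_mem hT ?_ ?_)
  · exact Set.symmDiff_nonempty.2 (SetLike.coe_injective.ne hne)
  · rintro x (⟨hxe, hxf⟩ | ⟨hxf, hxe⟩) y hxy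
    · exact .inr (mem_and_notMem_of_adj he hmeet hxe hxf hxy)
    · exact .inl (mem_and_notMem_of_adj hf (fun _ _ h ↦ (hmeet h).symm) hxf hxe hxy)

theorem not_isUniversal_of_mem (hdiag : ¬ e.IsDiag) (he : e ∉ T.edgeSet) {v : V} (hv : v ∈ e) :
    ¬ T.IsUniversal v := by
  obtain ⟨w, rfl⟩ := hv
  exact fun huniv ↦ he (huniv hdiag)

theorem mem_or_mem_of_codisjoint (hef : Codisjoint (e : Set V) (f : Set V)) (v : V) :
    v ∈ e ∨ v ∈ f :=
  Set.eq_univ_iff_forall.1 hef.eq_top v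

theorem adj_of_not_adj_of_preconnected {a b c d : V} (hT : T.Preconnected) (hne : a ≠ b)
    (hcover : ∀ v, v = a ∨ v = b ∨ v = c ∨ v = d) (hab : ¬ T.Adj a b) (hcd : ¬ T.Adj c d)
    (hac : ¬ T.Adj a c) : T.Adj a d ∧ T.Adj b c ∧ T.Adj b d := by
  have : Nontrivial V := ⟨a, b, hne⟩
  have had : T.Adj a d := by
    obtain ⟨w, haw⟩ := hT.exists_adj_of_nontrivial a
    rcases hcover w with rfl | rfl | rfl | rfl
    exacts [(haw.ne rfl).elim, (hab haw).elim, (hac haw).elim, haw]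
  have hbc : T.Adj b c := by
    obtain ⟨w, hcw⟩ := hT.exists_adj_of_nontrivial c
    rcases hcover w with rfl | rfl | rfl | rfl
    exacts [(hac hcw.symm).elim, hcw.symm, (hcw.ne rfl).elim, (hcd hcw).elim]
  refine ⟨had, hbc, ?_⟩
  by_contra hbd
  have hclosed : ({a, d} : Set V) = Set.univ := by
    refine eq_univ_of_forall_adj_mem hT ⟨a, .inl rfl⟩ ?_
    rintro x (rfl | rfl) y hxy <;> rcases hcover y with rfl | rfl | rfl | rfl <;>
      simp_all [T.adj_comm]
  rcases hclosed.symm ▸ Set.mem_univ b with rfl | rfl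
  exacts [hne rfl, hab had]

theorem nonempty_iso_completeGraph_or_K4MinusEdge {a b c d : V} (hne : a ≠ b)
    (hac : G.Adj a c) (had : G.Adj a d) (hbc : G.Adj b c) (hbd : G.Adj b d) (hcd : G.Adj c d)
    (hcover : ∀ v, v = a ∨ v = b ∨ v = c ∨ v = d) :
    Nonempty (G ≃g completeGraph (Fin 4)) ∨ Nonempty (G ≃g K4MinusEdge) := by
  have hbij : Function.Bijective ![a, b, c, d] := by
    constructor
    · have := hac.ne; have := had.ne; have := hbc.ne; have := hbd.ne; have := hcd.ne
      intro i j hij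
      fin_cases i <;> fin_cases j <;> simp_all [eq_comm]
    · intro v
      rcases hcover v with rfl | rfl | rfl | rfl
      exacts [⟨0, rfl⟩, ⟨1, rfl⟩, ⟨2, rfl⟩, ⟨3, rfl⟩]
  by_cases hab : G.Adj a b
  · refine .inl ⟨RelIso.symm ⟨Equiv.ofBijective _ hbij, fun {i j} ↦ ?_⟩⟩
    fin_cases i <;> fin_cases j <;> simp [*, completeGraph, G.adj_comm]
  · refine .inr ⟨RelIso.symm ⟨Equiv.ofBijective _ hbij, fun {i j} ↦ ?_⟩⟩
    fin_cases i <;> fin_cases j <;> simp [*, K4MinusEdge, completeGraph, G.adj_comm]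

theorem exists_eq_mk_adj_of_codisjoint (hT : T.Preconnected) (hdiag : ¬ e.IsDiag)
    (he : e ∉ T.edgeSet) (hf : f ∉ T.edgeSet) (hef : Codisjoint (e : Set V) (f : Set V)) :
    ∃ a b c d, e = s(a, b) ∧ f = s(c, d) ∧ T.Adj a d ∧ T.Adj b c ∧ T.Adj b d := by
  by_cases hall : ∀ a ∈ e, ∀ c ∈ f, T.Adj a c
  · obtain ⟨a, b⟩ := e
    obtain ⟨c, d⟩ := f
    exact ⟨a, b, c, d, rfl, rfl, by simp_all⟩
  · push Not at hall
    obtain ⟨a, ⟨b, rfl⟩, c, ⟨d, rfl⟩, hac⟩ := hall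
    have hcover (v : V) : v = a ∨ v = b ∨ v = c ∨ v = d := by
      simpa [or_assoc] using mem_or_mem_of_codisjoint hef v
    exact ⟨a, b, c, d, rfl, rfl, adj_of_not_adj_of_preconnected hT hdiag hcover he hf hac⟩

theorem nonempty_iso_of_isCompl (hT : T.Preconnected) (hTG : T ≤ G) (heG : e ∈ G.edgeSet)
    (hfG : f ∈ G.edgeSet) (he : e ∉ T.edgeSet) (hf : f ∉ T.edgeSet)
    (hef : IsCompl (e : Set V) (f : Set V)) :
    Nonempty (G ≃g completeGraph (Fin 4)) ∨ Nonempty (G ≃g K4MinusEdge) := by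
  obtain ⟨a, b, c, d, rfl, rfl, had, hbc, hbd⟩ :=
    exists_eq_mk_adj_of_codisjoint hT (G.not_isDiag_of_mem_edgeSet heG) he hf hef.codisjoint
  have hac : a ≠ c := hef.disjoint.ne_of_mem (Sym2.mem_mk_left a b) (Sym2.mem_mk_left c d)
  have hcover (v : V) : v = a ∨ v = c ∨ v = b ∨ v = d := by
    simpa [or_assoc, or_left_comm] using mem_or_mem_of_codisjoint hef.codisjoint v
  exact nonempty_iso_completeGraph_or_K4MinusEdge hac heG (hTG had) (hTG hbc.symm) hfG (hTG hbd)
    hcover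

end ComplementaryPairs

theorem isUniversal_of_iso_starK13 {T : SimpleGraph V} (φ : T ≃g StarK13) :
    T.IsUniversal (φ.symm 0) := by
  intro v hv
  rw [← φ.map_adj_iff, φ.apply_symm_apply]
  exact ⟨fun h ↦ hv (φ.symm_apply_eq.2 h), .inl rfl⟩

theorem spanningTree_edges_isDRS_lineGraph_general {G T : SimpleGraph V} (hTG : T ≤ G)
    (hT : T.Preconnected)
    (hK4 : (Nonempty (G ≃g completeGraph (Fin 4)) ∨ Nonempty (G ≃g K4MinusEdge)) →
      ∃ v, T.IsUniversal v) :
    IsDoublyResolvingSet G.lineGraph {e : G.edgeSet | (e : Sym2 V) ∈ T.edgeSet} := by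
  refine isDoublyResolvingSet_iff_eq_of_dist_sub_eq.2 fun e f k hk ↦ ?_
  by_contra hne
  have hG := hT.mono hTG
  have hdist := lineGraph_dist_eq_of_dist_sub_eq hT hTG hne hk
  have he : (e : Sym2 V) ∉ T.edgeSet := notMem_edgeSet_of_lineGraph_dist_eq hG hne hdist
  have hf : (f : Sym2 V) ∉ T.edgeSet :=
    notMem_edgeSet_of_lineGraph_dist_eq hG (Ne.symm hne) fun x hx ↦ (hdist x hx).symm
  have hef : IsCompl (e : Set V) (f : Set V) :=
    isCompl_of_mem_or_mem_iff hT (Subtype.coe_injective.ne hne) he hf fun _ _ hxy ↦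
      mem_or_mem_iff_of_lineGraph_dist_eq hG hTG hdist hxy
  obtain ⟨v, hv⟩ := hK4 (nonempty_iso_of_isCompl hT hTG e.2 f.2 he hf hef)
  rcases mem_or_mem_of_codisjoint hef.codisjoint v with hve | hvf
  · exact not_isUniversal_of_mem (G.not_isDiag_of_mem_edgeSet e.2) he hve hv
  · exact not_isUniversal_of_mem (G.not_isDiag_of_mem_edgeSet f.2) hf hvf hv

/-- Let `G` be a finite connected simple graph with at least three vertices and
`T` a spanning tree of `G` such that if `G ≅ K₄` or `G ≅ K₄⁻` then `T ≅ K_{1,3}`.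
Then `E(T)`, regarded as a set of vertices of `L(G)`, is a doubly resolving set of `L(G)`. -/
theorem spanningTree_edges_isDRS_lineGraph {V : Type*} [Fintype V] (G : SimpleGraph V)
    (hconn : G.Connected) (hcard : 3 ≤ Fintype.card V)
    (T : SimpleGraph V) (hsub : T ≤ G) (hT : T.IsTree)
    (hK4 : (Nonempty (G ≃g completeGraph (Fin 4)) ∨ Nonempty (G ≃g K4MinusEdge)) →
      Nonempty (T ≃g StarK13)) :
    IsDoublyResolvingSet G.lineGraph {e : G.edgeSet | (e : Sym2 V) ∈ T.edgeSet} := by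
  exact spanningTree_edges_isDRS_lineGraph_general hsub hT.connected.preconnected fun hG ↦
    (hK4 hG).elim fun φ ↦ ⟨_, isUniversal_of_iso_starK13 φ⟩
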